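/- Right-inverse and kernel identities: under (H0), (i) for every f ∈ L¹[−1,1] the function u = I^ψ_+ f, with u and its derivative u' extended by zero outside [−1,1], satisfies for a.e. x ∈ (−1,1): (d/dx) ∫_0^{x+1} Φ(y) u'(x−y) dy = f(x) and (d²/dx²) ∫_0^{x+1} Φ(y) u(x−y) dy = f(x); (ii) for every x ∈ (−1,1): (d²/dx²)(Φ ⋆ k₋₁⁺)(x) = 0, (d²/dx²)(Φ ⋆ k₀⁺)(x) = 0, and (d/dx)(Φ ⋆ k₋₁⁺)(x) = 0 (the last identity expressing ∂^ψ_+ k₀⁺ = 0, since (k₀⁺)' = k₋₁⁺). -/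

import Mathlib

open MeasureTheory Set Filter Topology

noncomputable section

/-- The tail `φ((y, ∞))` of the Lévy measure `φ`. -/
def levyTail (φ : Measure ℝ) (y : ℝ) : ℝ := (φ (Ioi y)).toReal

/-- The function `Φ(x) = ∫_x^∞ φ((y,∞)) dy` for `x > 0`, and `0` for `x ≤ 0`. -/
def PhiFn (φ : Measure ℝ) (x : ℝ) : ℝ :=
  if 0 < x then ∫ y in Ioi x, levyTail φ y else 0

/-- The Laplace exponent `ψ(ξ) = ξ² ∫_0^∞ e^{-ξ x} Φ(x) dx`. -/
def psiFn (φ : Measure ℝ) (ξ : ℂ) : ℂ :=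
  ξ ^ 2 * ∫ x in Ioi (0 : ℝ), Complex.exp (-ξ * (x : ℂ)) * (PhiFn φ x : ℂ)

/-- Assumption (H0): `φ` is a nonnegative Borel measure on `(0,∞)` with
`∫ (z² ∧ z) φ(dz) < ∞` and `∫_{(0,1)} z φ(dz) = ∞`. -/
def H0 (φ : Measure ℝ) : Prop :=
  φ (Iic 0) = 0 ∧
  (∫⁻ z in Ioi (0 : ℝ), ENNReal.ofReal (min (z ^ 2) z) ∂φ) < ⊤ ∧
  (∫⁻ z in Ioo (0 : ℝ) 1, ENNReal.ofReal z ∂φ) = ⊤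

/-- The defining properties of the scale kernel `k₋₁⁺` (extension by zero to `(-∞,-1)`
of the scale function `k₋₁` of Lemma 3.1): nonnegative on `[-1,∞)`, continuous on
`(-1,∞)`, locally integrable, of sub-exponential growth, with Laplace transform
`∫_0^∞ e^{-ξ y} k₋₁(y-1) dy = ξ/ψ(ξ)` on `{Re ξ > 0}`. -/
def IsScaleKernel (φ : Measure ℝ) (k : ℝ → ℝ) : Prop :=
  (∀ x : ℝ, x < -1 → k x = 0) ∧
  (∀ x : ℝ, -1 ≤ x → 0 ≤ k x) ∧
  ContinuousOn k (Ioi (-1)) ∧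
  LocallyIntegrableOn k (Ici (-1)) ∧
  (∀ ε : ℝ, 0 < ε → Tendsto (fun x : ℝ => Real.exp (-ε * x) * k x) atTop (nhds 0)) ∧
  ∀ ξ : ℂ, 0 < ξ.re →
    IntegrableOn (fun y : ℝ => Complex.exp (-ξ * (y : ℂ)) * (k (y - 1) : ℂ)) (Ioi 0) ∧
    (∫ y in Ioi (0 : ℝ), Complex.exp (-ξ * (y : ℂ)) * (k (y - 1) : ℂ)) = ξ / psiFn φ ξ

/-- Iterated antiderivatives: `kIter k 0 = k₋₁⁺` and `kIter k (n+1) = I₊ (kIter k n)`,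
so that `kₙ⁺ = kIter k (n+1)` for `n ≥ -1`. -/
def kIter (k : ℝ → ℝ) : ℕ → ℝ → ℝ
  | 0 => k
  | m + 1 => fun x => ∫ y in Iic x, kIter k m y

open scoped ENNReal

namespace H0

variable {φ : Measure ℝ}

lemma measure_Ioi_lt_top (h : H0 φ) {y : ℝ} (hy : 0 < y) : φ (Ioi y) < ⊤ := by
  have hc : 0 < min (y ^ 2) y := by positivity
  have hle : ENNReal.ofReal (min (y ^ 2) y) * φ (Ioi y) ≤
      ∫⁻ z in Ioi (0 : ℝ), ENNReal.ofReal (min (z ^ 2) z) ∂φ := by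
    rw [← setLIntegral_const]
    refine (setLIntegral_mono (by fun_prop) fun z hz => ?_).trans
      (lintegral_mono_set (Ioi_subset_Ioi hy.le))
    have hz' : y < z := hz
    exact ENNReal.ofReal_le_ofReal (min_le_min (by nlinarith) hz'.le)
  by_contra hinf
  rw [not_lt, top_le_iff] at hinf
  rw [hinf, ENNReal.mul_top (ENNReal.ofReal_pos.2 hc).ne'] at hle
  exact absurd h.2.1 (not_lt.2 hle)

lemma ofReal_levyTail (h : H0 φ) {y : ℝ} (hy : 0 < y) :
    ENNReal.ofReal (levyTail φ y) = φ (Ioi y) :=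
  ENNReal.ofReal_toReal (h.measure_Ioi_lt_top hy).ne

end H0

lemma levyTail_nonneg (φ : Measure ℝ) (y : ℝ) : 0 ≤ levyTail φ y := ENNReal.toReal_nonneg

lemma measurable_levyTail (φ : Measure ℝ) : Measurable (levyTail φ) :=
  (Antitone.measurable fun _ _ hab => measure_mono (Ioi_subset_Ioi hab)).ennreal_toReal

namespace H0

variable {φ : Measure ℝ}

lemma integrableOn_levyTail_mul_min (h : H0 φ) :
    IntegrableOn (fun t => levyTail φ t * min t 1) (Ioi 0) := by
  have hpos : 0 ≤ᵐ[φ] (fun z : ℝ => z) := by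
    have : φ (Iic 0) = 0 := h.1
    filter_upwards [measure_eq_zero_iff_ae_notMem.1 this] with z hz
    simpa using (not_le.1 hz).le
  have hcake := lintegral_comp_eq_lintegral_meas_lt_mul φ (f := fun z => z)
    (g := fun t => min t 1) hpos aemeasurable_id
    (fun t _ => (by fun_prop : Continuous fun t : ℝ => min t 1).intervalIntegrable _ _)
    (ae_restrict_of_forall_mem measurableSet_Ioi fun t ht =>
      le_min (le_of_lt ht) zero_le_one)
  have hbound : ∫⁻ z, ENNReal.ofReal (∫ t in (0 : ℝ)..z, min t 1) ∂φ ≤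
      ∫⁻ z in Ioi (0 : ℝ), ENNReal.ofReal (min (z ^ 2) z) ∂φ := by
    have hr : φ.restrict (Ioi 0) = φ := by
      refine Measure.restrict_eq_self_of_ae_mem ?_
      filter_upwards [measure_eq_zero_iff_ae_notMem.1 h.1] with z hz
      simpa using hz
    rw [hr]
    refine lintegral_mono_ae ?_
    filter_upwards [hpos] with z hz
    have hz : 0 ≤ z := hz
    refine ENNReal.ofReal_le_ofReal ?_
    calc ∫ t in (0 : ℝ)..z, min t 1 ≤ ∫ t in (0 : ℝ)..z, min z 1 := by
          refine intervalIntegral.integral_mono_on hz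
            ((by fun_prop : Continuous fun t : ℝ => min t 1).intervalIntegrable _ _)
            (by simp) fun t ht => min_le_min_right _ ht.2
      _ = min (z ^ 2) z := by
          rw [intervalIntegral.integral_const, smul_eq_mul, sub_zero, mul_min_of_nonneg _ _ hz]
          ring_nf
  refine ⟨((measurable_levyTail φ).mul (by fun_prop)).aestronglyMeasurable, ?_⟩
  rw [hasFiniteIntegral_iff_ofReal]
  · refine lt_of_le_of_lt ?_ (hbound.trans_lt h.2.1)
    rw [hcake]
    refine setLIntegral_mono' measurableSet_Ioi fun t ht => ?_
    rw [ENNReal.ofReal_mul (levyTail_nonneg _ _), h.ofReal_levyTail ht]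
    rfl
  · exact ae_restrict_of_forall_mem measurableSet_Ioi fun t ht =>
      mul_nonneg (levyTail_nonneg _ _) (le_min (le_of_lt ht) zero_le_one)

lemma exists_levyTail_pos (h : H0 φ) : ∃ a > 0, ∀ y ∈ Ioo 0 a, 0 < levyTail φ y := by
  by_contra! hcon
  have hzero : ∀ a > 0, φ (Ioi a) = 0 := by
    intro a ha
    obtain ⟨y, hy, hle⟩ := hcon a ha
    have h0 : φ (Ioi y) = 0 := by
      rw [← h.ofReal_levyTail hy.1, ENNReal.ofReal_eq_zero.2 hle]
    exact measure_mono_null (Ioi_subset_Ioi hy.2.le) h0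
  have hIoi : φ (Ioi 0) = 0 := by
    have hU : Ioi (0 : ℝ) = ⋃ n : ℕ, Ioi (1 / ((n : ℝ) + 1)) := by
      ext x
      simp only [mem_Ioi, mem_iUnion]
      exact ⟨fun hx => exists_nat_one_div_lt hx,
        fun ⟨n, hn⟩ => lt_trans (by positivity) hn⟩
    rw [hU, measure_iUnion_null_iff]
    exact fun n => hzero _ (by positivity)
  have := h.2.2
  rw [setLIntegral_measure_zero _ _ (measure_mono_null Ioo_subset_Ioi_self hIoi)] at this
  simp at this

lemma integrableOn_levyTail (h : H0 φ) {x : ℝ} (hx : 0 < x) :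
    IntegrableOn (levyTail φ) (Ioi x) := by
  have hc : 0 < min x 1 := by positivity
  refine Integrable.mono' ((h.integrableOn_levyTail_mul_min.mono_set
    (Ioi_subset_Ioi hx.le)).const_mul (min x 1)⁻¹)
    (measurable_levyTail φ).aestronglyMeasurable ?_
  refine ae_restrict_of_forall_mem measurableSet_Ioi fun t ht => ?_
  rw [Real.norm_of_nonneg (levyTail_nonneg _ _), inv_mul_eq_div, le_div_iff₀ hc]
  exact mul_le_mul_of_nonneg_left (min_le_min_right _ (le_of_lt ht)) (levyTail_nonneg _ _)

end H0

lemma PhiFn_of_pos (φ : Measure ℝ) {x : ℝ} (hx : 0 < x) :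
    PhiFn φ x = ∫ y in Ioi x, levyTail φ y := if_pos hx

lemma PhiFn_of_nonpos (φ : Measure ℝ) {x : ℝ} (hx : x ≤ 0) : PhiFn φ x = 0 :=
  if_neg (not_lt.2 hx)

lemma PhiFn_nonneg (φ : Measure ℝ) (x : ℝ) : 0 ≤ PhiFn φ x := by
  unfold PhiFn
  split_ifs
  · exact integral_nonneg fun y => levyTail_nonneg φ y
  · exact le_rfl

namespace H0

variable {φ : Measure ℝ}

lemma antitoneOn_PhiFn (h : H0 φ) : AntitoneOn (PhiFn φ) (Ioi 0) := by
  intro a ha b hb hab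
  rw [PhiFn_of_pos φ ha, PhiFn_of_pos φ hb]
  exact setIntegral_mono_set (h.integrableOn_levyTail ha)
    (ae_of_all _ fun y => levyTail_nonneg φ y) (Ioi_subset_Ioi hab).eventuallyLE

lemma continuousOn_PhiFn (h : H0 φ) : ContinuousOn (PhiFn φ) (Ioi 0) := by
  intro x hx
  have hx : 0 < x := hx
  have hx2 : 0 < x / 2 := by positivity
  have hii : ∀ b, x / 2 < b → IntervalIntegrable (levyTail φ) volume (x / 2) b := fun b hb =>
    (intervalIntegrable_iff_integrableOn_Ioc_of_le hb.le).2
      ((h.integrableOn_levyTail hx2).mono_set Ioc_subset_Ioi_self)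
  have hev : PhiFn φ =ᶠ[𝓝 x]
      fun z => (∫ y in Ioi (x / 2), levyTail φ y) - ∫ y in (x / 2)..z, levyTail φ y := by
    filter_upwards [Ioi_mem_nhds (half_lt_self hx)] with z hz
    have hz : x / 2 < z := hz
    rw [PhiFn_of_pos φ (hx2.trans hz),
      ← intervalIntegral.integral_interval_add_Ioi (h.integrableOn_levyTail hx2)
        (h.integrableOn_levyTail (hx2.trans hz))]
    ring
  refine (ContinuousAt.congr ?_ hev.symm).continuousWithinAt
  refine continuousAt_const.sub ?_
  have hcont := intervalIntegral.continuousOn_primitive_interval'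
    (hii (x + 1) (by linarith)) (left_mem_uIcc)
  refine hcont.continuousAt ?_
  rw [uIcc_of_le (by linarith)]
  exact Icc_mem_nhds (half_lt_self hx) (by linarith)

lemma measurable_PhiFn (h : H0 φ) : Measurable (PhiFn φ) := by
  refine measurable_of_continuousOn_compl_singleton 0 ?_
  intro x hx
  rcases lt_or_gt_of_ne (show x ≠ 0 from hx) with hx | hx
  · have : PhiFn φ =ᶠ[𝓝 x] fun _ => 0 := by
      filter_upwards [Iio_mem_nhds hx] with z hz using PhiFn_of_nonpos φ (le_of_lt hz)
    exact (continuousAt_const.congr this.symm).continuousWithinAt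
  · exact (h.continuousOn_PhiFn.continuousAt (Ioi_mem_nhds hx)).continuousWithinAt

end H0

lemma integral_exp_Ioo_le {a y : ℝ} (ha : 0 < a) (hy : 0 < y) :
    ∫ x in Ioo 0 y, Real.exp (-a * x) ≤ max 1 a⁻¹ * min y 1 := by
  have hexp : IntegrableOn (fun x => Real.exp (-a * x)) (Ioi 0) :=
    integrableOn_exp_mul_Ioi (neg_lt_zero.2 ha) 0
  have h1 : ∫ x in Ioo 0 y, Real.exp (-a * x) ≤ y := by
    calc ∫ x in Ioo 0 y, Real.exp (-a * x) ≤ ∫ x in Ioo 0 y, (1 : ℝ) := by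
          refine setIntegral_mono_on (hexp.mono_set Ioo_subset_Ioi_self) (by simp)
            measurableSet_Ioo fun x hx => ?_
          rw [Real.exp_le_one_iff]
          nlinarith [hx.1]
      _ = y := by simp [hy.le]
  have h2 : ∫ x in Ioo 0 y, Real.exp (-a * x) ≤ a⁻¹ := by
    calc ∫ x in Ioo 0 y, Real.exp (-a * x) ≤ ∫ x in Ioi 0, Real.exp (-a * x) :=
          setIntegral_mono_set hexp (ae_of_all _ fun x => (Real.exp_pos _).le)
            Ioo_subset_Ioi_self.eventuallyLE
      _ = a⁻¹ := by
          rw [integral_exp_mul_Ioi (neg_lt_zero.2 ha)]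
          simp
  rcases le_total y 1 with hy1 | hy1
  · rw [min_eq_left hy1]
    exact h1.trans (le_mul_of_one_le_left hy.le (le_max_left _ _))
  · rw [min_eq_right hy1, mul_one]
    exact h2.trans (le_max_right _ _)

namespace H0

variable {φ : Measure ℝ}

lemma integrable_exp_mul_levyTail (h : H0 φ) {ξ : ℂ} (hξ : 0 < ξ.re) :
    Integrable ({p : ℝ × ℝ | p.1 < p.2}.indicator
        fun p => Complex.exp (-ξ * (p.1 : ℂ)) * (levyTail φ p.2 : ℂ))
      ((volume.restrict (Ioi 0)).prod (volume.restrict (Ioi 0))) := by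
  have hT := measurable_levyTail φ
  have hmeas : Measurable ({p : ℝ × ℝ | p.1 < p.2}.indicator
        fun p => Complex.exp (-ξ * (p.1 : ℂ)) * (levyTail φ p.2 : ℂ)) :=
    Measurable.indicator (by fun_prop) (measurableSet_lt measurable_fst measurable_snd)
  rw [integrable_prod_iff' hmeas.aestronglyMeasurable]
  constructor
  · refine ae_of_all _ fun y => ?_
    have hexp : Integrable (fun x : ℝ => Complex.exp (-ξ * (x : ℂ))) (volume.restrict (Ioi 0)) :=
      integrableOn_exp_mul_complex_Ioi (by simpa using hξ) 0
    exact (hexp.mul_const (levyTail φ y : ℂ)).indicator (measurableSet_Iio (a := y))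
  · refine Integrable.mono' (h.integrableOn_levyTail_mul_min.const_mul (max 1 ξ.re⁻¹))
      hmeas.norm.stronglyMeasurable.integral_prod_left'.aestronglyMeasurable
      (ae_restrict_of_forall_mem measurableSet_Ioi fun y hy => ?_)
    have hy : 0 < y := hy
    rw [Real.norm_of_nonneg (integral_nonneg fun _ => norm_nonneg _)]
    have heq : ∀ x : ℝ, ‖({p : ℝ × ℝ | p.1 < p.2}.indicator
        (fun p => Complex.exp (-ξ * (p.1 : ℂ)) * (levyTail φ p.2 : ℂ))) (x, y)‖ =
        (Iio y).indicator (fun x => Real.exp (-ξ.re * x) * levyTail φ y) x := by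
      intro x
      rw [norm_indicator_eq_indicator_norm]
      by_cases hx : x < y
      · simp [hx, Complex.norm_exp, abs_of_nonneg (levyTail_nonneg φ y)]
      · simp [hx]
    simp_rw [heq]
    rw [integral_indicator measurableSet_Iio, Measure.restrict_restrict measurableSet_Iio,
      inter_comm, Ioi_inter_Iio, integral_mul_const]
    calc _ ≤ (max 1 ξ.re⁻¹ * min y 1) * levyTail φ y :=
          mul_le_mul_of_nonneg_right (integral_exp_Ioo_le hξ hy) (levyTail_nonneg φ y)
      _ = _ := by ring

lemma integral_exp_mul_levyTail_right {x : ℝ} (ξ : ℂ) (hx : 0 < x) :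
    ∫ y in Ioi (0 : ℝ), ({p : ℝ × ℝ | p.1 < p.2}.indicator
        (fun p => Complex.exp (-ξ * (p.1 : ℂ)) * (levyTail φ p.2 : ℂ))) (x, y) =
      Complex.exp (-ξ * (x : ℂ)) * (PhiFn φ x : ℂ) := by
  have heq : ∀ y : ℝ, ({p : ℝ × ℝ | p.1 < p.2}.indicator
      (fun p => Complex.exp (-ξ * (p.1 : ℂ)) * (levyTail φ p.2 : ℂ))) (x, y) =
      (Ioi x).indicator (fun y => Complex.exp (-ξ * (x : ℂ)) * (levyTail φ y : ℂ)) y :=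
    fun y => rfl
  simp_rw [heq]
  rw [integral_indicator measurableSet_Ioi, Measure.restrict_restrict measurableSet_Ioi,
    Ioi_inter_Ioi, max_eq_left hx.le, integral_const_mul, integral_complex_ofReal,
    PhiFn_of_pos φ hx]

lemma integral_exp_mul_levyTail_left {y : ℝ} {ξ : ℂ} (hξ : ξ ≠ 0) (hy : 0 < y) :
    ξ * ∫ x in Ioi (0 : ℝ), ({p : ℝ × ℝ | p.1 < p.2}.indicator
        (fun p => Complex.exp (-ξ * (p.1 : ℂ)) * (levyTail φ p.2 : ℂ))) (x, y) =
      (1 - Complex.exp (-ξ * (y : ℂ))) * (levyTail φ y : ℂ) := by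
  have heq : ∀ x : ℝ, ({p : ℝ × ℝ | p.1 < p.2}.indicator
      (fun p => Complex.exp (-ξ * (p.1 : ℂ)) * (levyTail φ p.2 : ℂ))) (x, y) =
      (Iio y).indicator (fun x : ℝ => Complex.exp (-ξ * (x : ℂ)) * (levyTail φ y : ℂ)) x :=
    fun x => rfl
  simp_rw [heq]
  rw [integral_indicator measurableSet_Iio, Measure.restrict_restrict measurableSet_Iio,
    inter_comm, Ioi_inter_Iio, integral_mul_const, ← integral_Ioc_eq_integral_Ioo,
    ← intervalIntegral.integral_of_le hy.le, integral_exp_mul_complex (neg_ne_zero.2 hξ)]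
  simp only [Complex.ofReal_zero, mul_zero, Complex.exp_zero]
  field_simp
  ring

/-- The Laplace transform of `Φ` converges absolutely on the right half-plane. -/
lemma integrableOn_exp_mul_PhiFn (h : H0 φ) {ξ : ℂ} (hξ : 0 < ξ.re) :
    IntegrableOn (fun x : ℝ => Complex.exp (-ξ * (x : ℂ)) * (PhiFn φ x : ℂ)) (Ioi 0) := by
  refine (h.integrable_exp_mul_levyTail hξ).integral_prod_left.congr ?_
  exact ae_restrict_of_forall_mem measurableSet_Ioi fun x hx =>
    integral_exp_mul_levyTail_right ξ hx

/-- `ξ ∫ e^{-ξx} Φ(x) dx = ∫ (1 - e^{-ξy}) φ((y,∞)) dy`, with an integrable right-hand side. -/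
lemma mul_integral_exp_mul_PhiFn (h : H0 φ) {ξ : ℂ} (hξ : 0 < ξ.re) :
    IntegrableOn (fun y : ℝ => (1 - Complex.exp (-ξ * (y : ℂ))) * (levyTail φ y : ℂ)) (Ioi 0) ∧
    ξ * ∫ x in Ioi (0 : ℝ), Complex.exp (-ξ * (x : ℂ)) * (PhiFn φ x : ℂ) =
      ∫ y in Ioi (0 : ℝ), (1 - Complex.exp (-ξ * (y : ℂ))) * (levyTail φ y : ℂ) := by
  have h_int := h.integrable_exp_mul_levyTail hξ
  have hξ0 : ξ ≠ 0 := by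
    rintro rfl
    simp at hξ
  constructor
  · refine (h_int.integral_prod_right.const_mul ξ).congr ?_
    exact ae_restrict_of_forall_mem measurableSet_Ioi fun y hy =>
      integral_exp_mul_levyTail_left hξ0 hy
  · rw [← setIntegral_congr_fun measurableSet_Ioi fun x hx =>
        integral_exp_mul_levyTail_right (φ := φ) ξ hx,
      integral_integral_swap (f := fun x y => ({p : ℝ × ℝ | p.1 < p.2}.indicator
        (fun p => Complex.exp (-ξ * (p.1 : ℂ)) * (levyTail φ p.2 : ℂ))) (x, y)) h_int,
      ← integral_const_mul]
    exact setIntegral_congr_fun measurableSet_Ioi fun y hy =>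
      integral_exp_mul_levyTail_left hξ0 hy

lemma integral_exp_mul_PhiFn_ne_zero (h : H0 φ) {ξ : ℂ} (hξ : 0 < ξ.re) :
    ∫ x in Ioi (0 : ℝ), Complex.exp (-ξ * (x : ℂ)) * (PhiFn φ x : ℂ) ≠ 0 := by
  obtain ⟨h_int, heq⟩ := h.mul_integral_exp_mul_PhiFn hξ
  intro h0
  rw [h0, mul_zero] at heq
  have hre : ∫ y in Ioi (0 : ℝ),
      ((1 - Complex.exp (-ξ * (y : ℂ))) * (levyTail φ y : ℂ)).re = 0 := by
    have := Complex.reCLM.integral_comp_comm h_int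
    simp only [Complex.reCLM_apply] at this
    rw [this, ← heq, Complex.zero_re]
  have hexp : ∀ y : ℝ, 0 < y → 0 < (1 - Complex.exp (-ξ * (y : ℂ))).re := by
    intro y hy
    have h1 : (Complex.exp (-ξ * (y : ℂ))).re ≤ ‖Complex.exp (-ξ * (y : ℂ))‖ :=
      Complex.re_le_norm _
    have h2 : ‖Complex.exp (-ξ * (y : ℂ))‖ < 1 := by
      rw [Complex.norm_exp, Real.exp_lt_one_iff]
      simpa using mul_pos hξ hy
    simp only [Complex.sub_re, Complex.one_re]
    linarith
  have hnn : 0 ≤ᵐ[volume.restrict (Ioi (0 : ℝ))]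
      fun y : ℝ => ((1 - Complex.exp (-ξ * (y : ℂ))) * (levyTail φ y : ℂ)).re := by
    refine ae_restrict_of_forall_mem measurableSet_Ioi fun y hy => ?_
    simp only [Complex.re_mul_ofReal]
    exact mul_nonneg (hexp y hy).le (levyTail_nonneg φ y)
  obtain ⟨a, ha, hpos⟩ := h.exists_levyTail_pos
  refine (((integral_pos_iff_support_of_nonneg_ae hnn h_int.re).2 ?_).ne' hre)
  refine lt_of_lt_of_le ?_ (measure_mono (s := Ioo 0 a) fun y hy => ?_)
  · rw [Measure.restrict_apply measurableSet_Ioo, inter_eq_left.2 Ioo_subset_Ioi_self]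
    simpa using ha
  · rw [Function.mem_support, Complex.re_mul_ofReal]
    exact (mul_pos (hexp y hy.1) (hpos y hy)).ne'

end H0

lemma integral_exp_mul_complex_Ioi_zero {ξ : ℂ} (hξ : 0 < ξ.re) :
    ∫ x in Ioi (0 : ℝ), Complex.exp (-ξ * (x : ℂ)) = 1 / ξ := by
  rw [integral_exp_mul_complex_Ioi (by simpa using hξ)]
  simp

/-- The characteristic function of a density proportional to `e^{-x} g(x)` on `(0, ∞)` is the
Laplace transform of `g` along the line `Re ξ = 1`. -/
lemma charFun_withDensity_exp_mul {g : ℝ → ℝ} (hg : Measurable g) (hnn : ∀ x, 0 ≤ g x)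
    (hzero : ∀ x < 0, g x = 0) (t : ℝ) :
    charFun (volume.withDensity fun x => ENNReal.ofReal (Real.exp (-x) * g x)) t =
      ∫ x in Ioi (0 : ℝ), Complex.exp (-(1 - t * Complex.I) * (x : ℂ)) * (g x : ℂ) := by
  rw [charFun_apply_real, integral_withDensity_eq_integral_toReal_smul (by fun_prop)
    (ae_of_all _ fun _ => ENNReal.ofReal_lt_top), ← integral_Ici_eq_integral_Ioi,
    setIntegral_eq_integral_of_forall_compl_eq_zero]
  · refine integral_congr_ae (ae_of_all _ fun x => ?_)
    simp only
    rw [ENNReal.toReal_ofReal (mul_nonneg (Real.exp_pos _).le (hnn x)), Complex.real_smul,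
      show -(1 - (t : ℂ) * Complex.I) * (x : ℂ) = ((-x : ℝ) : ℂ) + t * x * Complex.I by
        push_cast; ring, Complex.exp_add, ← Complex.ofReal_exp]
    push_cast
    ring
  · intro x hx
    rw [hzero x (by simpa using hx)]
    simp

lemma isFiniteMeasure_withDensity_exp_mul {g : ℝ → ℝ} (hzero : ∀ x < 0, g x = 0)
    (h_int : IntegrableOn (fun x : ℝ => Complex.exp (-1 * (x : ℂ)) * (g x : ℂ)) (Ioi 0)) :
    IsFiniteMeasure (volume.withDensity fun x => ENNReal.ofReal (Real.exp (-x) * g x)) := by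
  refine isFiniteMeasure_withDensity_ofReal ?_
  have h1 : IntegrableOn (fun x : ℝ => Complex.exp (-1 * (x : ℂ)) * (g x : ℂ)) (Ici 0) :=
    by
    rwa [integrableOn_Ici_iff_integrableOn_Ioi]
  have h2 : Integrable (fun x : ℝ => Complex.exp (-1 * (x : ℂ)) * (g x : ℂ)) := by
    refine (integrableOn_iff_integrable_of_support_subset fun x hx => ?_).1 h1
    by_contra hneg
    exact hx (by simp [hzero x (by simpa using hneg)])
  refine (h2.re.congr (ae_of_all _ fun x => ?_)).2
  simp [Complex.exp_re]

namespace IsScaleKernel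

variable {φ : Measure ℝ} {k : ℝ → ℝ}

lemma nonneg (hk : IsScaleKernel φ k) (x : ℝ) : 0 ≤ k x := by
  rcases lt_or_ge x (-1) with hx | hx
  · exact (hk.1 x hx).ge
  · exact hk.2.1 x hx

lemma measurable (hk : IsScaleKernel φ k) : Measurable k := by
  refine measurable_of_continuousOn_compl_singleton (-1) ?_
  intro x hx
  rcases lt_or_gt_of_ne (show x ≠ -1 from hx) with hx | hx
  · have : k =ᶠ[𝓝 x] fun _ => 0 := by
      filter_upwards [Iio_mem_nhds hx] with z hz using hk.1 z hz
    exact (continuousAt_const.congr this.symm).continuousWithinAt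
  · exact (hk.2.2.1.continuousAt (Ioi_mem_nhds hx)).continuousWithinAt

lemma integrableOn_Iic (hk : IsScaleKernel φ k) (m : ℝ) : IntegrableOn k (Iic m) := by
  have h1 : IntegrableOn k (Icc (-1) m) :=
    hk.2.2.2.1.integrableOn_compact_subset Icc_subset_Ici_self isCompact_Icc
  refine (h1.integrable_indicator measurableSet_Icc).integrableOn.congr_fun
    (fun y (hy : y ≤ m) => ?_) measurableSet_Iic
  by_cases hy1 : -1 ≤ y
  · exact indicator_of_mem (show y ∈ Icc (-1) m from ⟨hy1, hy⟩) _
  · rw [indicator_of_notMem fun hmem => hy1 hmem.1, hk.1 y (not_le.1 hy1)]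

/-- The Laplace transforms of `Φ` and of the shifted scale kernel are inverse to each other up to
the factor `1/ξ`. -/
lemma laplace_mul_laplace (hH0 : H0 φ) (hk : IsScaleKernel φ k) {ξ : ℂ} (hξ : 0 < ξ.re) :
    (∫ x in Ioi (0 : ℝ), Complex.exp (-ξ * (x : ℂ)) * (PhiFn φ x : ℂ)) *
      (∫ y in Ioi (0 : ℝ), Complex.exp (-ξ * (y : ℂ)) * (k (y - 1) : ℂ)) = 1 / ξ := by
  have hL := hH0.integral_exp_mul_PhiFn_ne_zero hξ
  have hξ0 : ξ ≠ 0 := by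
    rintro rfl
    simp at hξ
  rw [(hk.2.2.2.2.2 ξ hξ).2, psiFn]
  generalize ∫ x in Ioi (0 : ℝ), Complex.exp (-ξ * (x : ℂ)) * (PhiFn φ x : ℂ) = L at hL
  field_simp

lemma ae_lintegral_PhiFn_mul (hH0 : H0 φ) (hk : IsScaleKernel φ k) :
    ∀ᵐ x : ℝ, 0 < x →
      ∫⁻ y, ENNReal.ofReal (PhiFn φ y) * ENNReal.ofReal (k (x - 1 - y)) = 1 := by
  have hΦm := hH0.measurable_PhiFn
  have hkm := hk.measurable
  have hk1 : Measurable fun y => k (y - 1) := hkm.comp (measurable_id.sub_const 1)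
  have hum : Measurable ((Ici (0 : ℝ)).indicator fun _ => (1 : ℝ)) :=
    measurable_const.indicator measurableSet_Ici
  have hΦz : ∀ x < 0, PhiFn φ x = 0 := fun x hx => PhiFn_of_nonpos φ hx.le
  have hkz : ∀ x < 0, k (x - 1) = 0 := fun x hx => hk.1 _ (by linarith)
  have huz : ∀ x < 0, (Ici (0 : ℝ)).indicator (fun _ => (1 : ℝ)) x = 0 := fun x hx =>
    indicator_of_notMem (by simpa using hx) _
  have hun : ∀ x, 0 ≤ (Ici (0 : ℝ)).indicator (fun _ => (1 : ℝ)) x := fun x =>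
    indicator_nonneg (fun _ _ => zero_le_one) x
  have h1 : (0 : ℝ) < (1 : ℂ).re := by simp
  have hPf := isFiniteMeasure_withDensity_exp_mul hΦz
    (hH0.integrableOn_exp_mul_PhiFn h1)
  have hQf := isFiniteMeasure_withDensity_exp_mul hkz
    (hk.2.2.2.2.2 1 h1).1
  have hRf : IsFiniteMeasure (volume.withDensity fun x => ENNReal.ofReal
      (Real.exp (-x) * (Ici (0 : ℝ)).indicator (fun _ => (1 : ℝ)) x)) := by
    refine isFiniteMeasure_withDensity_exp_mul huz ?_
    refine (integrableOn_exp_mul_complex_Ioi (a := -1) (by simp) 0).congr_fun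
      (fun x (hx : 0 < x) => ?_) measurableSet_Ioi
    simp [hx.le]
  have hconv : (volume.withDensity fun x => ENNReal.ofReal (Real.exp (-x) * PhiFn φ x)) ∗
      (volume.withDensity fun x => ENNReal.ofReal (Real.exp (-x) * k (x - 1))) =
      volume.withDensity fun x => ENNReal.ofReal
        (Real.exp (-x) * (Ici (0 : ℝ)).indicator (fun _ => (1 : ℝ)) x) := by
    refine Measure.ext_of_charFun (funext fun t => ?_)
    have hre : 0 < (1 - t * Complex.I : ℂ).re := by simp
    rw [charFun_conv, charFun_withDensity_exp_mul hΦm (PhiFn_nonneg φ) hΦz,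
      charFun_withDensity_exp_mul hk1 (fun x => hk.nonneg _) hkz,
      charFun_withDensity_exp_mul hum hun huz, hk.laplace_mul_laplace hH0 hre,
      ← integral_exp_mul_complex_Ioi_zero hre]
    refine setIntegral_congr_fun measurableSet_Ioi fun x (hx : 0 < x) => ?_
    simp [hx.le]
  rw [conv_withDensity_eq_lconvolution (by fun_prop) (by fun_prop),
    withDensity_eq_iff_of_sigmaFinite
      (measurable_lconvolution _ (by fun_prop) (by fun_prop)).aemeasurable
      (by fun_prop)] at hconv
  filter_upwards [hconv] with x hx hx0
  have hexp : ENNReal.ofReal (Real.exp (-x)) ≠ 0 := by simp [Real.exp_pos]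
  rw [lconvolution_def, indicator_of_mem (show x ∈ Ici 0 from hx0.le), mul_one] at hx
  have hfac : ∀ y, ENNReal.ofReal (Real.exp (-y) * PhiFn φ y) *
      ENNReal.ofReal (Real.exp (-(-y + x)) * k (-y + x - 1)) =
      ENNReal.ofReal (Real.exp (-x)) *
        (ENNReal.ofReal (PhiFn φ y) * ENNReal.ofReal (k (x - 1 - y))) := by
    intro y
    rw [← ENNReal.ofReal_mul (by have := PhiFn_nonneg φ y; positivity),
      ← ENNReal.ofReal_mul (PhiFn_nonneg φ y), ← ENNReal.ofReal_mul (Real.exp_pos _).le,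
      show -(-y + x) = y + -x by ring, Real.exp_add, show -y + x - 1 = x - 1 - y by ring]
    congr 1
    have : Real.exp (-y) * Real.exp y = 1 := by rw [← Real.exp_add]; simp
    linear_combination (PhiFn φ y * Real.exp (-x) * k (x - 1 - y)) * this
  simp_rw [hfac] at hx
  rw [lintegral_const_mul _ (by fun_prop)] at hx
  exact (ENNReal.mul_right_inj hexp ENNReal.ofReal_ne_top).1 (hx.trans (mul_one _).symm)

end IsScaleKernel

lemma H0.integrableOn_PhiFn_Iic {φ : Measure ℝ} (h : H0 φ) (b : ℝ) :
    IntegrableOn (PhiFn φ) (Iic b) := by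
  have h1 : IntegrableOn (PhiFn φ) (Ioc 0 b) := by
    have hi := ((h.integrableOn_exp_mul_PhiFn (ξ := 1) (by simp)).mono_set
      (Ioc_subset_Ioi_self : Ioc 0 b ⊆ Ioi 0)).norm
    refine Integrable.mono' (hi.const_mul (Real.exp b)) h.measurable_PhiFn.aestronglyMeasurable
      (ae_restrict_of_forall_mem measurableSet_Ioc fun x hx => ?_)
    have hΦ := PhiFn_nonneg φ x
    rw [Real.norm_of_nonneg hΦ, norm_mul, Complex.norm_exp, Complex.norm_real,
      Real.norm_of_nonneg hΦ, ← mul_assoc, ← Real.exp_add]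
    refine le_mul_of_one_le_left hΦ (Real.one_le_exp ?_)
    simpa using hx.2
  refine (h1.integrable_indicator measurableSet_Ioc).integrableOn.congr_fun
    (fun y (hy : y ≤ b) => ?_) measurableSet_Iic
  by_cases hy1 : 0 < y
  · exact indicator_of_mem (show y ∈ Ioc 0 b from ⟨hy1, hy⟩) _
  · rw [indicator_of_notMem fun hmem => hy1 hmem.1, PhiFn_of_nonpos φ (not_lt.1 hy1)]

namespace IsScaleKernel

variable {φ : Measure ℝ} {k : ℝ → ℝ}

/-- The part of the convolution `Φ ⋆ k` in which the argument of `Φ` stays away from `0`. -/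
lemma continuousAt_integral_PhiFn_mul_Iic (hH0 : H0 φ) (hk : IsScaleKernel φ k) {m z₀ : ℝ}
    (hm : m < z₀) :
    (∀ᶠ z in 𝓝 z₀, Integrable fun y => PhiFn φ (z - y) * (Iic m).indicator k y) ∧
    ContinuousAt (fun z => ∫ y, PhiFn φ (z - y) * (Iic m).indicator k y) z₀ := by
  have hΦm := hH0.measurable_PhiFn
  have hkm : Measurable ((Iic m).indicator k) := hk.measurable.indicator measurableSet_Iic
  obtain ⟨d, hmd, hd⟩ := exists_between hm
  have hbi : Integrable fun y => PhiFn φ (d - m) * (Iic m).indicator k y :=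
    ((hk.integrableOn_Iic m).integrable_indicator measurableSet_Iic).const_mul _
  have hmeas : ∀ z, AEStronglyMeasurable fun y => PhiFn φ (z - y) * (Iic m).indicator k y :=
    fun z => ((hΦm.comp (measurable_const.sub measurable_id)).mul hkm).aestronglyMeasurable
  have hbound : ∀ z ∈ Ioi d, ∀ y, ‖PhiFn φ (z - y) * (Iic m).indicator k y‖ ≤
      PhiFn φ (d - m) * (Iic m).indicator k y := by
    intro z hz y
    by_cases hy : y ≤ m
    · have hz : d < z := hz
      rw [indicator_of_mem (show y ∈ Iic m from hy), Real.norm_of_nonneg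
        (mul_nonneg (PhiFn_nonneg _ _) (hk.nonneg _))]
      refine mul_le_mul_of_nonneg_right (hH0.antitoneOn_PhiFn ?_ ?_ ?_) (hk.nonneg _)
      · simpa using hmd
      · simp only [mem_Ioi]; linarith
      · linarith
    · simp [hy]
  have hev : ∀ᶠ z in 𝓝 z₀, z ∈ Ioi d := Ioi_mem_nhds hd
  refine ⟨hev.mono fun z hz => hbi.mono' (hmeas z) (ae_of_all _ (hbound z hz)),
    continuousAt_of_dominated (Eventually.of_forall hmeas)
      (hev.mono fun z hz => ae_of_all _ (hbound z hz)) hbi (ae_of_all _ fun y => ?_)⟩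
  by_cases hy : y ≤ m
  · have hcont : ContinuousAt (PhiFn φ) (z₀ - y) :=
      hH0.continuousOn_PhiFn.continuousAt (Ioi_mem_nhds (by linarith))
    exact (hcont.comp' (f := fun z => z - y) (by fun_prop)).mul continuousAt_const
  · simp only [indicator_of_notMem (show y ∉ Iic m from hy), mul_zero]
    exact continuousAt_const

/-- The part of the convolution `Φ ⋆ k` in which the argument of `k` stays away from `-1`. -/
lemma continuousAt_integral_PhiFn_mul_Ioi (hH0 : H0 φ) (hk : IsScaleKernel φ k) {m z₀ : ℝ}
    (hm1 : -1 < m) :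
    (∀ᶠ z in 𝓝 z₀, Integrable fun y => PhiFn φ y * (Ioi m).indicator k (z - y)) ∧
    ContinuousAt (fun z => ∫ y, PhiFn φ y * (Ioi m).indicator k (z - y)) z₀ := by
  have hΦm := hH0.measurable_PhiFn
  have hkm : Measurable ((Ioi m).indicator k) := hk.measurable.indicator measurableSet_Ioi
  obtain ⟨M, hM⟩ : ∃ M, ∀ x ∈ Icc m (z₀ + 1), ‖k x‖ ≤ M :=
    isCompact_Icc.exists_bound_of_continuousOn
      (hk.2.2.1.mono fun x hx => lt_of_lt_of_le hm1 hx.1)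
  have hbi : Integrable fun y => (Iic (z₀ + 1 - m)).indicator (PhiFn φ) y * |M| :=
    ((hH0.integrableOn_PhiFn_Iic _).integrable_indicator measurableSet_Iic).mul_const _
  have hmeas : ∀ z, AEStronglyMeasurable fun y => PhiFn φ y * (Ioi m).indicator k (z - y) :=
    fun z => (hΦm.mul (hkm.comp (measurable_const.sub measurable_id))).aestronglyMeasurable
  have hbound : ∀ z ∈ Iio (z₀ + 1), ∀ y, ‖PhiFn φ y * (Ioi m).indicator k (z - y)‖ ≤
      (Iic (z₀ + 1 - m)).indicator (PhiFn φ) y * |M| := by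
    intro z hz y
    have hz : z < z₀ + 1 := hz
    have hrhs : 0 ≤ (Iic (z₀ + 1 - m)).indicator (PhiFn φ) y * |M| :=
      mul_nonneg (indicator_nonneg (fun _ _ => PhiFn_nonneg _ _) _) (abs_nonneg _)
    by_cases hy : m < z - y
    · rcases lt_or_ge 0 y with hy0 | hy0
      · rw [indicator_of_mem (show z - y ∈ Ioi m from hy),
          indicator_of_mem (show y ∈ Iic (z₀ + 1 - m) by simp only [mem_Iic]; linarith),
          norm_mul, Real.norm_of_nonneg (PhiFn_nonneg _ _)]
        exact mul_le_mul_of_nonneg_left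
          ((hM _ ⟨hy.le, by linarith⟩).trans (le_abs_self _)) (PhiFn_nonneg _ _)
      · rw [PhiFn_of_nonpos φ hy0, zero_mul, norm_zero]
        exact hrhs
    · rw [indicator_of_notMem (show z - y ∉ Ioi m from hy), mul_zero, norm_zero]
      exact hrhs
  have hev : ∀ᶠ z in 𝓝 z₀, z ∈ Iio (z₀ + 1) := Iio_mem_nhds (lt_add_one _)
  refine ⟨hev.mono fun z hz => hbi.mono' (hmeas z) (ae_of_all _ (hbound z hz)),
    continuousAt_of_dominated (Eventually.of_forall hmeas)
      (hev.mono fun z hz => ae_of_all _ (hbound z hz)) hbi ?_⟩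
  filter_upwards [measure_eq_zero_iff_ae_notMem.1 (measure_singleton (μ := volume) (z₀ - m))]
    with y hy
  refine continuousAt_const.mul (ContinuousAt.comp' (f := fun z => z - y) ?_ (by fun_prop))
  rcases lt_or_gt_of_ne (show y ≠ z₀ - m from hy) with hy | hy
  · have hlt : m < z₀ - y := by linarith
    refine (hk.2.2.1.continuousAt (Ioi_mem_nhds (hm1.trans hlt))).congr ?_
    filter_upwards [Ioi_mem_nhds hlt] with x hx using (indicator_of_mem hx k).symm
  · have hlt : z₀ - y < m := by linarith
    refine (continuousAt_const (y := (0 : ℝ))).congr ?_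
    filter_upwards [Iio_mem_nhds hlt] with x hx
    exact (indicator_of_notMem (show x ∉ Ioi m from not_lt.2 (show x ≤ m from le_of_lt hx)) k).symm

lemma continuousAt_integral_PhiFn_mul (hH0 : H0 φ) (hk : IsScaleKernel φ k) {z₀ : ℝ}
    (hz₀ : -1 < z₀) :
    Integrable (fun y => PhiFn φ y * k (z₀ - y)) ∧
    ContinuousAt (fun z => ∫ y, PhiFn φ y * k (z - y)) z₀ := by
  obtain ⟨m, hm1, hm⟩ := exists_between hz₀
  obtain ⟨hAi, hAc⟩ := hk.continuousAt_integral_PhiFn_mul_Iic hH0 hm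
  obtain ⟨hBi, hBc⟩ := hk.continuousAt_integral_PhiFn_mul_Ioi hH0 (z₀ := z₀) hm1
  have hsplit : ∀ z, (fun y => PhiFn φ y * k (z - y)) = fun y =>
      PhiFn φ (z - (z - y)) * (Iic m).indicator k (z - y) +
        PhiFn φ y * (Ioi m).indicator k (z - y) := by
    intro z
    funext y
    rw [sub_sub_cancel, ← mul_add]
    congr 1
    rcases le_or_gt (z - y) m with h | h
    · rw [indicator_of_mem (show z - y ∈ Iic m from h),
        indicator_of_notMem (show z - y ∉ Ioi m from not_lt.2 h), add_zero]
    · rw [indicator_of_notMem (show z - y ∉ Iic m from not_le.2 h),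
        indicator_of_mem (show z - y ∈ Ioi m from h), zero_add]
  have hAi' : ∀ᶠ z in 𝓝 z₀, Integrable fun y =>
      PhiFn φ (z - (z - y)) * (Iic m).indicator k (z - y) :=
    hAi.mono fun z hz => hz.comp_sub_left z
  refine ⟨?_, (hAc.add hBc).congr ?_⟩
  · rw [hsplit]
    exact hAi'.self_of_nhds.add hBi.self_of_nhds
  · filter_upwards [hAi', hBi] with z hA hB
    rw [hsplit, integral_add hA hB,
      integral_sub_left_eq_self (fun y => PhiFn φ (z - y) * (Iic m).indicator k y) volume z]
    rfl

/-- `Φ ⋆ k₋₁⁺ = 1` everywhere on `(-1, ∞)`. -/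
lemma lintegral_PhiFn_mul (hH0 : H0 φ) (hk : IsScaleKernel φ k) {z : ℝ} (hz : -1 < z) :
    ∫⁻ y, ENNReal.ofReal (PhiFn φ y) * ENNReal.ofReal (k (z - y)) = 1 := by
  have hnn : ∀ z y, 0 ≤ PhiFn φ y * k (z - y) := fun z y =>
    mul_nonneg (PhiFn_nonneg _ _) (hk.nonneg _)
  have hof : ∀ z, -1 < z → ENNReal.ofReal (∫ y, PhiFn φ y * k (z - y)) =
      ∫⁻ y, ENNReal.ofReal (PhiFn φ y) * ENNReal.ofReal (k (z - y)) := by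
    intro z hz
    rw [ofReal_integral_eq_lintegral_ofReal (hk.continuousAt_integral_PhiFn_mul hH0 hz).1
      (ae_of_all _ (hnn z))]
    simp_rw [ENNReal.ofReal_mul (PhiFn_nonneg φ _)]
  have hae : (fun z => ∫ y, PhiFn φ y * k (z - y)) =ᵐ[volume.restrict (Ioi (-1))]
      fun _ => (1 : ℝ) := by
    refine (ae_restrict_iff' measurableSet_Ioi).2 ?_
    have hshift := (quasiMeasurePreserving_add_right (volume : Measure ℝ) 1).ae
      (hk.ae_lintegral_PhiFn_mul hH0)
    filter_upwards [hshift] with z hz hz1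
    have hz1 : -1 < z := hz1
    have h1 := hz (by linarith)
    rw [add_sub_cancel_right, ← hof z hz1] at h1
    exact ENNReal.ofReal_eq_one.1 h1
  have heq := Measure.eqOn_open_of_ae_eq hae isOpen_Ioi
    (fun z hz => (hk.continuousAt_integral_PhiFn_mul hH0 hz).2.continuousWithinAt)
    continuousOn_const hz
  rw [← hof z hz]
  simpa using heq

lemma kIter_one_nonneg (hk : IsScaleKernel φ k) (x : ℝ) : 0 ≤ kIter k 1 x :=
  integral_nonneg hk.nonneg

lemma kIter_one_eq_zero (hk : IsScaleKernel φ k) {x : ℝ} (hx : x < -1) : kIter k 1 x = 0 :=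
  setIntegral_eq_zero_of_forall_eq_zero fun y hy => hk.1 y (lt_of_le_of_lt hy hx)

lemma measurable_kIter_one (hk : IsScaleKernel φ k) : Measurable (kIter k 1) :=
  Monotone.measurable fun _ b hab => setIntegral_mono_set (hk.integrableOn_Iic b)
    (ae_of_all _ hk.nonneg) (Iic_subset_Iic.2 hab).eventuallyLE

lemma ofReal_kIter_one (hk : IsScaleKernel φ k) (x : ℝ) :
    ENNReal.ofReal (kIter k 1 x) = ∫⁻ t in Iic x, ENNReal.ofReal (k t) :=
  ofReal_integral_eq_lintegral_ofReal (hk.integrableOn_Iic x) (ae_of_all _ hk.nonneg)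

end IsScaleKernel

lemma lintegral_PhiFn_mul_eq_zero (φ : Measure ℝ) {K : ℝ → ℝ} (hK : ∀ x < -1, K x = 0) {z : ℝ}
    (hz : z < -1) : ∫⁻ y, ENNReal.ofReal (PhiFn φ y) * ENNReal.ofReal (K (z - y)) = 0 := by
  rw [← lintegral_zero (μ := (volume : Measure ℝ))]
  refine lintegral_congr fun y => ?_
  rcases le_or_gt y 0 with hy | hy
  · rw [PhiFn_of_nonpos φ hy, ENNReal.ofReal_zero, zero_mul]
  · rw [hK _ (by linarith), ENNReal.ofReal_zero, mul_zero]

/-- `Φ ⋆ k₀⁺ = z + 1` on `(-1, ∞)`. -/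
lemma IsScaleKernel.lintegral_PhiFn_mul_kIter_one {φ : Measure ℝ} {k : ℝ → ℝ} (hH0 : H0 φ)
    (hk : IsScaleKernel φ k) (z : ℝ) :
    ∫⁻ y, ENNReal.ofReal (PhiFn φ y) * ENNReal.ofReal (kIter k 1 (z - y)) =
      ENNReal.ofReal (z + 1) := by
  have hΦm := hH0.measurable_PhiFn
  have hkm := hk.measurable
  have hshift : ∀ y, ENNReal.ofReal (kIter k 1 (z - y)) =
      ∫⁻ s in Iic z, ENNReal.ofReal (k (s - y)) := by
    intro y
    rw [hk.ofReal_kIter_one, ← lintegral_indicator measurableSet_Iic,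
      ← lintegral_indicator measurableSet_Iic, ← lintegral_sub_right_eq_self _ y]
    refine lintegral_congr fun s => ?_
    simp only [indicator, mem_Iic, sub_le_sub_iff_right]
  calc ∫⁻ y, ENNReal.ofReal (PhiFn φ y) * ENNReal.ofReal (kIter k 1 (z - y))
      = ∫⁻ y, ∫⁻ s in Iic z, ENNReal.ofReal (PhiFn φ y) * ENNReal.ofReal (k (s - y)) := by
        refine lintegral_congr fun y => ?_
        rw [hshift, lintegral_const_mul _ (by fun_prop)]
    _ = ∫⁻ s in Iic z, ∫⁻ y, ENNReal.ofReal (PhiFn φ y) * ENNReal.ofReal (k (s - y)) :=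
        lintegral_lintegral_swap (by fun_prop)
    _ = ∫⁻ s in Iic z, (Ioi (-1)).indicator 1 s := by
        refine lintegral_congr_ae (ae_restrict_of_ae ?_)
        filter_upwards [measure_eq_zero_iff_ae_notMem.1
          (measure_singleton (μ := volume) (-1 : ℝ))] with s hs
        rcases lt_or_gt_of_ne (show s ≠ -1 from hs) with hs | hs
        · rw [indicator_of_notMem (show s ∉ Ioi (-1) from not_lt.2 hs.le),
            lintegral_PhiFn_mul_eq_zero φ hk.1 hs]
        · rw [indicator_of_mem (show s ∈ Ioi (-1) from hs), hk.lintegral_PhiFn_mul hH0 hs]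
          rfl
    _ = ENNReal.ofReal (z + 1) := by
        rw [lintegral_indicator_one measurableSet_Ioi, Measure.restrict_apply measurableSet_Ioi,
          Ioi_inter_Iic, Real.volume_Ioc, sub_neg_eq_add]

lemma integral_PhiFn_mul_eq {φ : Measure ℝ} (hH0 : H0 φ) {K : ℝ → ℝ} (hKm : Measurable K)
    (hKn : ∀ x, 0 ≤ K x) {z c : ℝ} (hc : 0 ≤ c)
    (h : ∫⁻ y, ENNReal.ofReal (PhiFn φ y) * ENNReal.ofReal (K (z - y)) = ENNReal.ofReal c) :
    ∫ y, PhiFn φ y * K (z - y) = c := by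
  have hmeas : AEStronglyMeasurable fun y => PhiFn φ y * K (z - y) :=
    (hH0.measurable_PhiFn.mul (hKm.comp (measurable_const.sub measurable_id))).aestronglyMeasurable
  rw [integral_eq_lintegral_of_nonneg_ae
    (ae_of_all _ fun y => mul_nonneg (PhiFn_nonneg _ _) (hKn _)) hmeas]
  simp_rw [ENNReal.ofReal_mul (PhiFn_nonneg φ _)]
  rw [h, ENNReal.toReal_ofReal hc]

lemma integral_PhiFn_sub_mul_eq {φ : Measure ℝ} (hH0 : H0 φ) {K : ℝ → ℝ} (hKm : Measurable K)
    (hKn : ∀ x, 0 ≤ K x) {z c : ℝ} (hc : 0 ≤ c)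
    (h : ∫⁻ y, ENNReal.ofReal (PhiFn φ y) * ENNReal.ofReal (K (z - y)) = ENNReal.ofReal c) :
    ∫ y, PhiFn φ (z - y) * K y = c := by
  rw [← integral_sub_left_eq_self _ volume z, ← integral_PhiFn_mul_eq hH0 hKm hKn hc h]
  simp_rw [sub_sub_cancel]

/-- If `Φ ⋆ K = c` on `(-1, ∞)`, then convolving `Φ` with the potential `∫ K(t - s - 1) f(s) ds`
of `f` amounts to integrating `f` against `c`. -/
lemma integral_PhiFn_mul_potential {φ : Measure ℝ} (hH0 : H0 φ) {K c : ℝ → ℝ} {M : ℝ}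
    (hKm : Measurable K) (hKn : ∀ x, 0 ≤ K x) (hK0 : ∀ x < -1, K x = 0)
    (hc0 : ∀ x ∈ Ioo (-1 : ℝ) 1, 0 ≤ c x) (hcM : ∀ x ∈ Ioo (-1 : ℝ) 1, c x ≤ M)
    (hc : ∀ x ∈ Ioo (-1 : ℝ) 1,
      ∫⁻ y, ENNReal.ofReal (PhiFn φ y) * ENNReal.ofReal (K (x - y)) = ENNReal.ofReal (c x))
    {f : ℝ → ℝ} (hf : IntegrableOn f (Icc (-1) 1)) {z : ℝ} (hz : z ∈ Ioo (-1 : ℝ) 1) :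
    ∫ y in (0 : ℝ)..(z + 1), PhiFn φ y * (Icc (-1 : ℝ) 1).indicator
        (fun t : ℝ => ∫ s in (-1 : ℝ)..t, K (t - s - 1) * f s) (z - y) =
      ∫ s in (-1 : ℝ)..z, c (z - s - 1) * f s := by
  have hΦm := hH0.measurable_PhiFn
  obtain ⟨hz1, hz2⟩ := hz
  set g : ℝ → ℝ := (Ioc (-1 : ℝ) 1).indicator f with hg
  have hgi : Integrable g :=
    (hf.mono_set Ioc_subset_Icc_self).integrable_indicator measurableSet_Ioc
  have hg0 : ∀ s, s ≤ -1 → g s = 0 := fun s hs =>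
    indicator_of_notMem (fun hmem => absurd hmem.1 (not_lt.2 hs)) f
  have hne : ∀ᵐ s : ℝ, s ≠ z :=
    measure_eq_zero_iff_ae_notMem.1 (measure_singleton (μ := volume) z)
  have hlhs : ∫ y in (0 : ℝ)..(z + 1), PhiFn φ y * (Icc (-1 : ℝ) 1).indicator
        (fun t : ℝ => ∫ s in (-1 : ℝ)..t, K (t - s - 1) * f s) (z - y) =
      ∫ y, ∫ s, PhiFn φ y * (K (z - s - 1 - y) * g s) := by
    rw [intervalIntegral.integral_of_le (by linarith), ← integral_indicator measurableSet_Ioc]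
    refine integral_congr_ae (ae_of_all _ fun y => ?_)
    simp only
    rw [integral_const_mul]
    by_cases hy : y ∈ Ioc 0 (z + 1)
    · rw [indicator_of_mem hy, indicator_of_mem
        (show z - y ∈ Icc (-1 : ℝ) 1 from ⟨by linarith [hy.2], by linarith [hy.1]⟩),
        intervalIntegral.integral_of_le (by linarith [hy.2]),
        ← integral_indicator measurableSet_Ioc]
      congr 1
      refine integral_congr_ae (ae_of_all _ fun s => ?_)
      simp only
      by_cases hs : s ∈ Ioc (-1) (z - y)
      · rw [indicator_of_mem hs, hg, indicator_of_mem
          (show s ∈ Ioc (-1 : ℝ) 1 from ⟨hs.1, by linarith [hs.2, hy.1]⟩)]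
        ring_nf
      · rw [indicator_of_notMem hs]
        rcases le_or_gt s (-1) with hs1 | hs1
        · rw [hg0 s hs1, mul_zero]
        · have : z - y < s := not_le.1 fun hle => hs ⟨hs1, hle⟩
          rw [hK0 _ (by linarith), zero_mul]
    · rw [indicator_of_notMem hy]
      rcases le_or_gt y 0 with hy0 | hy0
      · rw [PhiFn_of_nonpos φ hy0, zero_mul]
      · have hyz : z + 1 < y := not_le.1 fun hle => hy ⟨hy0, hle⟩
        rw [integral_eq_zero_of_ae (ae_of_all _ fun s => ?_), mul_zero]
        rcases le_or_gt s (-1) with hs1 | hs1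
        · simp [hg0 s hs1]
        · simp [hK0 (z - s - 1 - y) (by linarith)]
  have hmeas : AEStronglyMeasurable
      (fun p : ℝ × ℝ => PhiFn φ p.1 * (K (z - p.2 - 1 - p.1) * g p.2))
      ((volume : Measure ℝ).prod volume) := by
    have h1 : Measurable fun p : ℝ × ℝ => K (z - p.2 - 1 - p.1) := hKm.comp (by fun_prop)
    have h2 : Measurable fun p : ℝ × ℝ => PhiFn φ p.1 := hΦm.comp measurable_fst
    exact h2.aestronglyMeasurable.mul
      (h1.aestronglyMeasurable.mul hgi.aestronglyMeasurable.comp_snd)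
  have hprod : Integrable (fun p : ℝ × ℝ => PhiFn φ p.1 * (K (z - p.2 - 1 - p.1) * g p.2))
      ((volume : Measure ℝ).prod volume) := by
    refine ⟨hmeas, ?_⟩
    rw [hasFiniteIntegral_iff_enorm, lintegral_prod_symm _ hmeas.enorm]
    have hslice : ∀ s, ∫⁻ y, ‖PhiFn φ y * (K (z - s - 1 - y) * g s)‖ₑ =
        (∫⁻ y, ENNReal.ofReal (PhiFn φ y) * ENNReal.ofReal (K (z - s - 1 - y))) * ‖g s‖ₑ := by
      intro s
      rw [← lintegral_mul_const _ (by fun_prop)]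
      refine lintegral_congr fun y => ?_
      rw [enorm_mul, enorm_mul, Real.enorm_of_nonneg (PhiFn_nonneg _ _),
        Real.enorm_of_nonneg (hKn _), mul_assoc]
    calc ∫⁻ s, ∫⁻ y, ‖PhiFn φ y * (K (z - s - 1 - y) * g s)‖ₑ
        ≤ ∫⁻ s, ENNReal.ofReal M * ‖g s‖ₑ := by
          refine lintegral_mono_ae ?_
          filter_upwards [hne] with s hs
          rw [hslice]
          rcases le_or_gt s (-1) with hs1 | hs1
          · simp [hg0 s hs1]
          · refine mul_le_mul_left ?_ _
            rcases lt_or_gt_of_ne hs with hs2 | hs2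
            · have hmem : z - s - 1 ∈ Ioo (-1 : ℝ) 1 := ⟨by linarith, by linarith⟩
              rw [hc _ hmem]
              exact ENNReal.ofReal_le_ofReal (hcM _ hmem)
            · rw [lintegral_PhiFn_mul_eq_zero φ hK0 (by linarith)]
              exact bot_le
      _ = ENNReal.ofReal M * ∫⁻ s, ‖g s‖ₑ :=
          lintegral_const_mul' _ _ ENNReal.ofReal_ne_top
      _ < ⊤ := ENNReal.mul_lt_top ENNReal.ofReal_lt_top hgi.2
  rw [hlhs, integral_integral_swap (f := fun y s => PhiFn φ y * (K (z - s - 1 - y) * g s)) hprod,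
    intervalIntegral.integral_of_le hz1.le, ← integral_indicator measurableSet_Ioc]
  refine integral_congr_ae ?_
  filter_upwards [hne] with s hs
  simp_rw [← mul_assoc]
  rw [integral_mul_const]
  rcases le_or_gt s (-1) with hs1 | hs1
  · rw [hg0 s hs1, mul_zero, indicator_of_notMem fun hmem => absurd hmem.1 (not_lt.2 hs1)]
  · rcases lt_or_gt_of_ne hs with hs2 | hs2
    · have hmem : z - s - 1 ∈ Ioo (-1 : ℝ) 1 := ⟨by linarith, by linarith⟩
      rw [integral_PhiFn_mul_eq hH0 hKm hKn (hc0 _ hmem) (hc _ hmem),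
        indicator_of_mem (show s ∈ Ioc (-1) z from ⟨hs1, hs2.le⟩), hg,
        indicator_of_mem (show s ∈ Ioc (-1 : ℝ) 1 from ⟨hs1, by linarith⟩)]
    · rw [integral_PhiFn_mul_eq hH0 hKm hKn le_rfl
        ((lintegral_PhiFn_mul_eq_zero φ hK0 (by linarith)).trans ENNReal.ofReal_zero.symm),
        zero_mul, indicator_of_notMem fun hmem => absurd hmem.2 (not_le.2 hs2)]

/-- Cauchy's formula for the twice iterated integral. -/
lemma integral_sub_mul_eq_integral_integral {f : ℝ → ℝ} {a z : ℝ} (haz : a ≤ z)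
    (hf : IntegrableOn f (Icc a z)) :
    ∫ s in a..z, (z - s) * f s = ∫ t in a..z, ∫ s in a..t, f s := by
  set g : ℝ → ℝ := (Ioc a z).indicator f with hg
  have hgi : Integrable g :=
    (hf.mono_set Ioc_subset_Icc_self).integrable_indicator measurableSet_Ioc
  have hprod : Integrable (fun p : ℝ × ℝ => {q : ℝ × ℝ | q.2 ≤ q.1}.indicator (fun q => g q.2) p)
      ((volume.restrict (Ioc a z)).prod volume) :=
    (hgi.comp_snd _).indicator (measurableSet_le measurable_snd measurable_fst)
  rw [intervalIntegral.integral_of_le haz, intervalIntegral.integral_of_le haz,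
    ← integral_indicator measurableSet_Ioc]
  calc ∫ s, (Ioc a z).indicator (fun s => (z - s) * f s) s
      = ∫ s, ∫ t in Ioc a z, {q : ℝ × ℝ | q.2 ≤ q.1}.indicator (fun q => g q.2) (t, s) := by
        refine integral_congr_ae (ae_of_all _ fun s => ?_)
        simp only
        by_cases hs : s ∈ Ioc a z
        · have hind : ∀ t, {q : ℝ × ℝ | q.2 ≤ q.1}.indicator (fun q => g q.2) (t, s) =
              (Ici s).indicator (fun _ => g s) t := fun t => rfl
          simp_rw [hind]
          have hset : Ici s ∩ Ioc a z = Icc s z := by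
            ext t
            simp only [mem_inter_iff, mem_Ici, mem_Ioc, mem_Icc]
            exact ⟨fun h => ⟨h.1, h.2.2⟩, fun h => ⟨h.1, hs.1.trans_le h.1, h.2⟩⟩
          rw [integral_indicator measurableSet_Ici, Measure.restrict_restrict measurableSet_Ici,
            hset, setIntegral_const, measureReal_def, Real.volume_Icc,
            ENNReal.toReal_ofReal (by linarith [hs.2]), indicator_of_mem hs, hg,
            indicator_of_mem hs, smul_eq_mul]
        · have hgs : g s = 0 := indicator_of_notMem hs f
          simp [indicator_of_notMem hs, indicator_apply, hgs]
    _ = ∫ t in Ioc a z, ∫ s, {q : ℝ × ℝ | q.2 ≤ q.1}.indicator (fun q => g q.2) (t, s) :=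
        (integral_integral_swap hprod).symm
    _ = ∫ t in Ioc a z, ∫ s in a..t, f s := by
        refine setIntegral_congr_fun measurableSet_Ioc fun t ht => ?_
        rw [intervalIntegral.integral_of_le ht.1.le, ← integral_indicator measurableSet_Ioc]
        refine integral_congr_ae (ae_of_all _ fun s => ?_)
        simp only [hg, indicator_apply, mem_ofPred_eq, mem_Ioc]
        by_cases hs : s ≤ t
        · simp [hs, hs.trans ht.2]
        · simp [hs]

lemma hasDerivAt_integral_sub_mul {f : ℝ → ℝ} {a b x : ℝ} (hf : IntegrableOn f (Icc a b))
    (hx : x ∈ Ioo a b) :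
    HasDerivAt (fun z => ∫ s in a..z, (z - s) * f s) (∫ s in a..x, f s) x := by
  have hcont : ContinuousOn (fun t => ∫ s in a..t, f s) (Icc a b) :=
    intervalIntegral.continuousOn_primitive_interval
      (by rwa [uIcc_of_le (hx.1.trans hx.2).le]) |>.mono (Icc_subset_uIcc)
  have hder : HasDerivAt (fun z => ∫ t in a..z, ∫ s in a..t, f s) (∫ s in a..x, f s) x := by
    refine intervalIntegral.integral_hasDerivAt_right
      ((hcont.mono (Icc_subset_Icc_right hx.2.le)).intervalIntegrable_of_Icc hx.1.le)
      ((hcont.mono Ioo_subset_Icc_self).stronglyMeasurableAtFilter isOpen_Ioo x hx)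
      (hcont.continuousAt (Icc_mem_nhds hx.1 hx.2))
  refine hder.congr_of_eventuallyEq ?_
  filter_upwards [isOpen_Ioo.mem_nhds hx] with z hz
  exact integral_sub_mul_eq_integral_integral hz.1.le (hf.mono_set (Icc_subset_Icc_right hz.2.le))

lemma iteratedDeriv_two_of_eqOn {g h F : ℝ → ℝ} {U : Set ℝ} (hU : IsOpen U) (hgh : EqOn g h U)
    (hF : ∀ x ∈ U, HasDerivAt h (F x) x) {x : ℝ} (hx : x ∈ U) :
    iteratedDeriv 2 g x = deriv F x := by
  rw [iteratedDeriv_succ, iteratedDeriv_one]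
  refine EventuallyEq.deriv_eq ?_
  filter_upwards [hU.mem_nhds hx] with y hy
  rw [(hgh.eventuallyEq_of_mem (hU.mem_nhds hy)).deriv_eq, (hF y hy).deriv]

/-- right-inverse identities `∂^ψ_+ I^ψ_+ f = f = D^ψ_+ I^ψ_+ f` a.e.
on `(-1,1)`, and the kernel identities `D^ψ_+ k₋₁⁺ = D^ψ_+ k₀⁺ = 0` and
`∂^ψ_+ k₀⁺ = 0` on `(-1,1)`. -/
theorem right_inverse_and_kernel_identities (φ : Measure ℝ) (hH0 : H0 φ) (k : ℝ → ℝ)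
    (hk : IsScaleKernel φ k) :
    (∀ f : ℝ → ℝ, IntegrableOn f (Icc (-1) 1) →
      (∀ᵐ x ∂(volume.restrict (Ioo (-1 : ℝ) 1)),
        deriv (fun z : ℝ => ∫ y in (0 : ℝ)..(z + 1),
          PhiFn φ y *
            (Icc (-1 : ℝ) 1).indicator
              (fun t : ℝ => ∫ s in (-1 : ℝ)..t, k (t - s - 1) * f s) (z - y)) x = f x) ∧
      (∀ᵐ x ∂(volume.restrict (Ioo (-1 : ℝ) 1)),
        iteratedDeriv 2 (fun z : ℝ => ∫ y in (0 : ℝ)..(z + 1),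
          PhiFn φ y *
            (Icc (-1 : ℝ) 1).indicator
              (fun t : ℝ => ∫ s in (-1 : ℝ)..t, kIter k 1 (t - s - 1) * f s) (z - y)) x
          = f x)) ∧
    (∀ x ∈ Ioo (-1 : ℝ) 1,
      iteratedDeriv 2 (fun z : ℝ => ∫ y : ℝ, PhiFn φ (z - y) * k y) x = 0 ∧
      iteratedDeriv 2 (fun z : ℝ => ∫ y : ℝ, PhiFn φ (z - y) * kIter k 1 y) x = 0 ∧
      deriv (fun z : ℝ => ∫ y : ℝ, PhiFn φ (z - y) * k y) x = 0) := by
  have hkm := hk.measurable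
  have hk1m := hk.measurable_kIter_one
  have hone : ∀ x ∈ Ioo (-1 : ℝ) 1,
      ∫⁻ y, ENNReal.ofReal (PhiFn φ y) * ENNReal.ofReal (k (x - y)) = ENNReal.ofReal 1 :=
    fun x hx => (hk.lintegral_PhiFn_mul hH0 hx.1).trans ENNReal.ofReal_one.symm
  refine ⟨fun f hf => ?_, fun x hx => ?_⟩
  · have hdiff : ∀ᵐ x ∂(volume.restrict (Ioo (-1 : ℝ) 1)),
        HasDerivAt (fun z => ∫ s in (-1 : ℝ)..z, f s) (f x) x := by
      rw [ae_restrict_iff' measurableSet_Ioo]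
      have hfi : IntervalIntegrable f volume (-1) 1 :=
        (intervalIntegrable_iff_integrableOn_Icc_of_le (by norm_num)).2 hf
      filter_upwards [hfi.ae_hasDerivAt_integral] with x hx hmem
      exact hx (Icc_subset_uIcc (Ioo_subset_Icc_self hmem)) _ left_mem_uIcc
    constructor
    · filter_upwards [hdiff, ae_restrict_mem measurableSet_Ioo] with x hx hmem
      refine (hx.congr_of_eventuallyEq ?_).deriv
      filter_upwards [isOpen_Ioo.mem_nhds hmem] with z hz
      rw [integral_PhiFn_mul_potential hH0 (c := fun _ => 1) hkm hk.nonneg hk.1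
        (fun _ _ => zero_le_one) (fun _ _ => le_rfl) hone hf hz]
      simp_rw [one_mul]
    · filter_upwards [hdiff, ae_restrict_mem measurableSet_Ioo] with x hx hmem
      rw [← hx.deriv]
      refine iteratedDeriv_two_of_eqOn isOpen_Ioo (fun z hz => ?_)
        (fun z hz => hasDerivAt_integral_sub_mul hf hz) hmem
      rw [integral_PhiFn_mul_potential hH0 (c := fun x => x + 1) (M := 2) hk1m
        hk.kIter_one_nonneg (fun _ => hk.kIter_one_eq_zero) (fun _ h => by linarith [h.1])
        (fun _ h => by linarith [h.2]) (fun x _ => hk.lintegral_PhiFn_mul_kIter_one hH0 x) hf hz]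
      simp_rw [sub_add_cancel]
  · have hconv : EqOn (fun z : ℝ => ∫ y : ℝ, PhiFn φ (z - y) * k y) (fun _ => 1)
        (Ioo (-1 : ℝ) 1) := fun z hz =>
      integral_PhiFn_sub_mul_eq hH0 hkm hk.nonneg zero_le_one (hone z hz)
    have hconv_one : EqOn (fun z : ℝ => ∫ y : ℝ, PhiFn φ (z - y) * kIter k 1 y) (fun z => z + 1)
        (Ioo (-1 : ℝ) 1) := fun z hz =>
      integral_PhiFn_sub_mul_eq hH0 hk1m hk.kIter_one_nonneg (by linarith [hz.1])
        (hk.lintegral_PhiFn_mul_kIter_one hH0 z)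
    refine ⟨?_, ?_, ?_⟩
    · rw [iteratedDeriv_two_of_eqOn isOpen_Ioo hconv (fun z _ => hasDerivAt_const z 1) hx,
        deriv_const]
    · rw [iteratedDeriv_two_of_eqOn isOpen_Ioo hconv_one
        (fun z _ => (hasDerivAt_id z).add_const 1) hx, deriv_const]
    · rw [(hconv.eventuallyEq_of_mem (isOpen_Ioo.mem_nhds hx)).deriv_eq, deriv_const]
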